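/- Transfer of almost-sure truth: Fix a finite relational vocabulary τ without equality and a finite algebra A ⊆ [0,1] closed under the truth functions. An MD-sentence ⟨φ₁,…,φ_m; S⟩, where each φ_i is a first-order sentence and S ⊆ A^m, is almost surely true on A-valued models with finite domains if and only if the classical sentence ⋁_{(a₁,…,a_m) ∈ S} (T^{a₁}(φ₁) ∧ … ∧ T^{a_m}(φ_m)) is almost surely true on the finite classical models of Σ (i.e., the fraction, among τ*-structures with domain {1,…,n} satisfying Σ, of those satisfying the sentence tends to 1 as n → ∞). -/

import Mathlib

/-! Statement 11: Transfer of almost-sure truth through the classical translation (Proposition 5.3). -/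

open Classical

noncomputable section

instance : Fact ((0:ℝ) ≤ 1) := ⟨zero_le_one⟩

/-- The real unit interval, as the set of truth values. -/
abbrev UI : Type := unitInterval

/-- A relational vocabulary: a type of predicate symbols with arities. -/
structure Vocab : Type 1 where
  Pred : Type
  arity : Pred → ℕ

/-- A family of (propositional) connectives with arities. -/
structure Conns : Type 1 where
  Conn : Type
  carity : Conn → ℕ

/-- A real-valued logic: a truth function for each connective. -/
def TruthFns (C : Conns) : Type := ∀ c : C.Conn, (Fin (C.carity c) → UI) → UI

/-- First-order formulas over the vocabulary `V` and connectives `C`,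
with variables named by natural numbers. -/
inductive Formula (V : Vocab) (C : Conns) : Type
  | pred (P : V.Pred) (v : Fin (V.arity P) → ℕ) : Formula V C
  | conn (c : C.Conn) (args : Fin (C.carity c) → Formula V C) : Formula V C
  | all (y : ℕ) (φ : Formula V C) : Formula V C
  | ex (y : ℕ) (φ : Formula V C) : Formula V C

/-- A real-valued first-order model with domain `M`. -/
structure Model (V : Vocab) (M : Type) where
  interp : ∀ P : V.Pred, (Fin (V.arity P) → M) → UI

variable {V : Vocab} {C : Conns} {M : Type}

/-- The truth value of a formula at a valuation `ν : ℕ → M`: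
connectives are computed by their truth functions, `∀` by infimum over the
domain and `∃` by supremum over the domain. -/
def eval (truth : TruthFns C) (𝔐 : Model V M) : Formula V C → (ℕ → M) → UI
  | .pred P v => fun ν => 𝔐.interp P fun i => ν (v i)
  | .conn c args => fun ν => truth c fun i => eval truth 𝔐 (args i) ν
  | .all y φ => fun ν => ⨅ e : M, eval truth 𝔐 φ (Function.update ν y e)
  | .ex y φ => fun ν => ⨆ e : M, eval truth 𝔐 φ (Function.update ν y e)

/-- A multi-dimensional sentence over the domain `M`: a finite sequence of
component formulas together with an information set `S` of tuples of
interpretations. -/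
structure MDSentence (V : Vocab) (C : Conns) (M : Type) where
  k : ℕ
  comps : Fin k → Formula V C
  S : Set (Fin k → (ℕ → M) → UI)

/-- Satisfaction: the tuple of interpretations of the components lies in `S`. -/
def Sat (truth : TruthFns C) (𝔐 : Model V M) (σ : MDSentence V C M) : Prop :=
  (fun i => eval truth 𝔐 (σ.comps i)) ∈ σ.S

/-- A tuple is *good* for the components `comps` if it respects the semantics
of the connectives and quantifiers wherever the immediate subformulas of a
component also occur among the components. -/
def GoodTuple (truth : TruthFns C) {k : ℕ} (comps : Fin k → Formula V C)
    (f : Fin k → (ℕ → M) → UI) : Prop :=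
  (∀ (m : Fin k) (c : C.Conn) (args : Fin (C.carity c) → Formula V C)
      (g : Fin (C.carity c) → Fin k),
      comps m = .conn c args → (∀ j, comps (g j) = args j) →
      f m = fun ν => truth c fun j => f (g j) ν) ∧
  (∀ (i j : Fin k) (y : ℕ) (φ : Formula V C), comps i = .all y φ → comps j = φ →
      f i = fun ν => ⨅ e : M, f j (Function.update ν y e)) ∧
  (∀ (i j : Fin k) (y : ℕ) (φ : Formula V C), comps i = .ex y φ → comps j = φ →
      f i = fun ν => ⨆ e : M, f j (Function.update ν y e))

/-- The variable `x` occurs free in a formula. -/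
def FreeIn {V : Vocab} {C : Conns} : ℕ → Formula V C → Prop
  | x, .pred _ v => ∃ i, v i = x
  | x, .conn _ args => ∃ i, FreeIn x (args i)
  | x, .all y φ => x ≠ y ∧ FreeIn x φ
  | x, .ex y φ => x ≠ y ∧ FreeIn x φ

/-- A sentence is a formula with no free variables. -/
def IsSentence {V : Vocab} {C : Conns} (φ : Formula V C) : Prop :=
  ∀ x, ¬ FreeIn x φ

/-- Classical first-order formulas over the starred vocabulary `τ*`, which has
a predicate `P^a` for each predicate `P` of `τ` and each truth value `a ∈ A`,
with finite conjunctions and disjunctions (given by lists), negation and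
quantifiers. -/
inductive CFormula (V : Vocab) (A : Finset UI) : Type
  | pred (P : V.Pred) (a : ↥A) (v : Fin (V.arity P) → ℕ) : CFormula V A
  | ands (l : List (CFormula V A)) : CFormula V A
  | ors (l : List (CFormula V A)) : CFormula V A
  | not (φ : CFormula V A) : CFormula V A
  | call (y : ℕ) (φ : CFormula V A) : CFormula V A
  | cex (y : ℕ) (φ : CFormula V A) : CFormula V A

/-- A classical structure for the starred vocabulary `τ*`. -/
structure CModel (V : Vocab) (A : Finset UI) (M : Type) where
  interp : ∀ P : V.Pred, ↥A → (Fin (V.arity P) → M) → Prop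

/-- Classical (two-valued) satisfaction of starred formulas. -/
def csat {V : Vocab} {A : Finset UI} {M : Type} (𝔑 : CModel V A M) :
    CFormula V A → (ℕ → M) → Prop
  | .pred P a v => fun ν => 𝔑.interp P a fun i => ν (v i)
  | .ands l => fun ν => ∀ ψ ∈ l.attach, csat 𝔑 ψ.1 ν
  | .ors l => fun ν => ∃ ψ ∈ l.attach, csat 𝔑 ψ.1 ν
  | .not φ => fun ν => ¬ csat 𝔑 φ ν
  | .call y φ => fun ν => ∀ e : M, csat 𝔑 φ (Function.update ν y e)
  | .cex y φ => fun ν => ∃ e : M, csat 𝔑 φ (Function.update ν y e)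
decreasing_by
  all_goals simp_wf
  all_goals first
    | (have h := List.sizeOf_lt_of_mem ψ.2; omega)
    | omega

/-- The translation `T^a` of a many-valued formula into a classical starred
formula: `T^a(P x̄) = P^a x̄`; `T^a(∘(ψ₁,…,ψ_n))` is the disjunction over all
tuples `b ∈ A^n` with `∘(b₁,…,b_n) = a` of the conjunctions `⋀ᵢ T^{bᵢ}(ψᵢ)`;
for the quantifiers, a disjunction over all tuples `b₁,…,b_k ∈ A`
(`1 ≤ k ≤ |A|`) whose max (resp. min) is `a` of `⋀ᵢ ∃x T^{bᵢ}(ψ)`, in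
conjunction with `∀x ⋁_{b ≤ a} T^b(ψ)` (resp. `∀x ⋁_{b ≥ a} T^b(ψ)`); the
last conjunct is the paper's `∀y ⋁_b T^b(ψ(y/x))` up to α-equivalence. -/
def transl {V : Vocab} {C : Conns} (truth : TruthFns C) (A : Finset UI) :
    Formula V C → ↥A → CFormula V A
  | .pred P v => fun a => .pred P a v
  | .conn c args => fun a =>
      .ors (((Finset.univ.filter
          (fun b : Fin (C.carity c) → ↥A =>
            truth c (fun i => (b i : UI)) = (a : UI))).toList.map
        (fun b => CFormula.ands
          (List.ofFn fun i => transl truth A (args i) (b i)))))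
  | .ex y φ => fun a =>
      .ands [
        .ors ((List.range A.card).flatMap (fun m =>
          ((Finset.univ.filter
              (fun b : Fin (m+1) → ↥A => (⨆ i, (b i : UI)) = (a : UI))).toList.map
            (fun b => CFormula.ands
              (List.ofFn fun i : Fin (m+1) =>
                CFormula.cex y (transl truth A φ (b i))))))),
        .call y (.ors ((Finset.univ.filter
            (fun b : ↥A => (b : UI) ≤ (a : UI))).toList.map
          (fun b => transl truth A φ b)))]
  | .all y φ => fun a =>
      .ands [
        .ors ((List.range A.card).flatMap (fun m =>
          ((Finset.univ.filter
              (fun b : Fin (m+1) → ↥A => (⨅ i, (b i : UI)) = (a : UI))).toList.map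
            (fun b => CFormula.ands
              (List.ofFn fun i : Fin (m+1) =>
                CFormula.cex y (transl truth A φ (b i))))))),
        .call y (.ors ((Finset.univ.filter
            (fun b : ↥A => (a : UI) ≤ (b : UI))).toList.map
          (fun b => transl truth A φ b)))]

/-- Universal closure over the variables `0, …, n-1`. -/
def foralls {V : Vocab} {A : Finset UI} : ℕ → CFormula V A → CFormula V A
  | 0, φ => φ
  | n + 1, φ => .call n (foralls n φ)

/-- The axiom of `Σ` saying that each tuple satisfies `P^a` for some
`a ∈ A`. -/
def totalAx {V : Vocab} (A : Finset UI) (P : V.Pred) : CFormula V A :=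
  foralls (V.arity P)
    (.ors ((Finset.univ : Finset ↥A).toList.map
      (fun a => CFormula.pred P a (fun i => (i : ℕ)))))

/-- The axiom of `Σ` saying that no tuple satisfies both `P^a` and `P^b` for
`a ≠ b`. -/
def exclAx {V : Vocab} (A : Finset UI) (P : V.Pred) (a b : ↥A) : CFormula V A :=
  foralls (V.arity P)
    (.not (.ands [CFormula.pred P a (fun i => (i : ℕ)),
                  CFormula.pred P b (fun i => (i : ℕ))]))

/-- The classical theory `Σ`. -/
def SigmaTheory (V : Vocab) (A : Finset UI) : Set (CFormula V A) :=
  {ψ | (∃ P : V.Pred, ψ = totalAx A P) ∨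
       (∃ (P : V.Pred) (a b : ↥A), a ≠ b ∧ ψ = exclAx A P a b)}

/-- A classical structure is a model of `Σ` when it satisfies every member of
`Σ` at every valuation. -/
def SatSigma {V : Vocab} {M : Type} (A : Finset UI) (𝔑 : CModel V A M) : Prop :=
  ∀ ψ ∈ SigmaTheory V A, ∀ ν : ℕ → M, csat 𝔑 ψ ν

/-- The classical structure `𝔐*` associated with a many-valued model `𝔐`:
`P^a` holds of a tuple iff `P` takes value `a` there. -/
def star {V : Vocab} {M : Type} (A : Finset UI) (𝔐 : Model V M) :
    CModel V A M :=
  ⟨fun P a t => 𝔐.interp P t = (a : UI)⟩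

/-- An `A`-valued model: each predicate is interpreted by a map into `A`. -/
def AModel (V : Vocab) (A : Finset UI) (M : Type) : Type :=
  ∀ P : V.Pred, (Fin (V.arity P) → M) → ↥A

/-- The real-valued model underlying an `A`-valued model. -/
def AModel.toModel {V : Vocab} {A : Finset UI} {M : Type}
    (𝔐 : AModel V A M) : Model V M :=
  ⟨fun P t => (𝔐 P t : UI)⟩

/-- Satisfaction of an MD-sentence `⟨φ₁, …, φ_m; S⟩` (components sentences,
`S ⊆ A^m`) in an `A`-valued model: the tuple of truth values of the
components lies in `S`. -/
def ASatVals {V : Vocab} {C : Conns} {A : Finset UI} {M : Type}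
    (truth : TruthFns C) (𝔐 : AModel V A M) {m : ℕ}
    (φ : Fin m → Formula V C) (S : Set (Fin m → ↥A)) : Prop :=
  ∃ v ∈ S, ∀ (i : Fin m) (ν : ℕ → M),
    eval truth 𝔐.toModel (φ i) ν = (v i : UI)

theorem csat_ands' {A : Finset UI} (𝔑 : CModel V A M) (l : List (CFormula V A)) (ν : ℕ → M) :
    csat 𝔑 (.ands l) ν ↔ ∀ ψ ∈ l, csat 𝔑 ψ ν := by
  rw [csat]
  simp

theorem csat_ors' {A : Finset UI} (𝔑 : CModel V A M) (l : List (CFormula V A)) (ν : ℕ → M) :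
    csat 𝔑 (.ors l) ν ↔ ∃ ψ ∈ l, csat 𝔑 ψ ν := by
  rw [csat]
  simp

theorem csat_pred' {A : Finset UI} (𝔑 : CModel V A M) (P : V.Pred) (a : ↥A)
    (v : Fin (V.arity P) → ℕ) (ν : ℕ → M) :
    csat 𝔑 (.pred P a v) ν ↔ 𝔑.interp P a fun i => ν (v i) := by
  rw [csat]

theorem csat_not' {A : Finset UI} (𝔑 : CModel V A M) (φ : CFormula V A) (ν : ℕ → M) :
    csat 𝔑 (.not φ) ν ↔ ¬ csat 𝔑 φ ν := by
  rw [csat]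

theorem csat_call' {A : Finset UI} (𝔑 : CModel V A M) (y : ℕ) (φ : CFormula V A) (ν : ℕ → M) :
    csat 𝔑 (.call y φ) ν ↔ ∀ e : M, csat 𝔑 φ (Function.update ν y e) := by
  rw [csat]

theorem csat_cex' {A : Finset UI} (𝔑 : CModel V A M) (y : ℕ) (φ : CFormula V A) (ν : ℕ → M) :
    csat 𝔑 (.cex y φ) ν ↔ ∃ e : M, csat 𝔑 φ (Function.update ν y e) := by
  rw [csat]

theorem eval_mem (truth : TruthFns C) (A : Finset UI)
    (hA : ∀ (c : C.Conn) (b : Fin (C.carity c) → UI), (∀ i, b i ∈ A) → truth c b ∈ A)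
    [Finite M] [Nonempty M] (𝔐 : AModel V A M) (φ : Formula V C) :
    ∀ ν : ℕ → M, eval truth 𝔐.toModel φ ν ∈ A := by
  induction φ with
  | pred P v => intro ν; exact (𝔐 P _).2
  | conn c args ih => intro ν; exact hA c _ fun i => ih i ν
  | all y φ ih =>
    intro ν
    obtain ⟨e, he⟩ := exists_eq_ciInf_of_finite
      (f := fun e : M => eval truth 𝔐.toModel φ (Function.update ν y e))
    simp only [eval]
    rw [← he]; exact ih _
  | ex y φ ih =>
    intro ν
    obtain ⟨e, he⟩ := exists_eq_ciSup_of_finite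
      (f := fun e : M => eval truth 𝔐.toModel φ (Function.update ν y e))
    simp only [eval]
    rw [← he]; exact ih _

theorem csat_transl (truth : TruthFns C) (A : Finset UI)
    (hA : ∀ (c : C.Conn) (b : Fin (C.carity c) → UI), (∀ i, b i ∈ A) → truth c b ∈ A)
    [Finite M] [Nonempty M] (𝔐 : AModel V A M) (φ : Formula V C) :
    ∀ (a : ↥A) (ν : ℕ → M), csat (star A 𝔐.toModel) (transl truth A φ a) ν ↔
      eval truth 𝔐.toModel φ ν = (a : UI) := by
  induction φ with
  | pred P v => intro a ν; simp only [transl, csat_pred', eval]; rfl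
  | conn c args ih =>
    intro a ν
    simp only [transl, csat_ors', List.mem_map, Finset.mem_toList, Finset.mem_filter,
      Finset.mem_univ, true_and, exists_exists_and_eq_and, csat_ands', List.forall_mem_ofFn_iff,
      ih, eval]
    constructor
    · rintro ⟨b, hb, h⟩
      rw [← hb]; congr 1; funext i; exact h i
    · intro h
      exact ⟨fun i => ⟨_, eval_mem truth A hA 𝔐 (args i) ν⟩, h, fun i => rfl⟩
  | all y φ ih =>
    intro a ν
    have hc : 0 < A.card := Finset.card_pos.2 ⟨a, a.2⟩
    simp only [transl, csat_ands', List.forall_mem_cons, csat_ors', List.mem_flatMap,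
      List.mem_range, List.mem_map, Finset.mem_toList, Finset.mem_filter,
      Finset.mem_univ, true_and, csat_call', exists_exists_and_eq_and, eval]
    constructor
    · rintro ⟨⟨_, ⟨k, hk, b, hb, rfl⟩, h⟩, h2, -⟩
      simp only [csat_ands', List.forall_mem_ofFn_iff, csat_cex', ih] at h
      apply le_antisymm
      · rw [← hb]
        refine le_iInf fun i => ?_
        obtain ⟨e, he⟩ := h i
        rw [← he]; exact iInf_le _ e
      · refine le_iInf fun e => ?_
        obtain ⟨b, hb, h3⟩ := h2 e
        rw [(ih _ _).1 h3]; exact hb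
    · intro h
      obtain ⟨e, he⟩ := exists_eq_ciInf_of_finite
        (f := fun e : M => eval truth 𝔐.toModel φ (Function.update ν y e))
      refine ⟨⟨_, ⟨0, hc, fun _ => a, by simp, rfl⟩, ?_⟩, ?_, by simp⟩
      · simp only [csat_ands', List.forall_mem_ofFn_iff, csat_cex', ih]
        exact fun _ => ⟨e, he.trans h⟩
      · intro e
        refine ⟨⟨_, eval_mem truth A hA 𝔐 φ (Function.update ν y e)⟩, ?_, (ih _ _).2 rfl⟩
        rw [← h]; exact iInf_le _ e
  | ex y φ ih =>
    intro a ν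
    have hc : 0 < A.card := Finset.card_pos.2 ⟨a, a.2⟩
    simp only [transl, csat_ands', List.forall_mem_cons, csat_ors', List.mem_flatMap,
      List.mem_range, List.mem_map, Finset.mem_toList, Finset.mem_filter,
      Finset.mem_univ, true_and, csat_call', exists_exists_and_eq_and, eval]
    constructor
    · rintro ⟨⟨_, ⟨k, hk, b, hb, rfl⟩, h⟩, h2, -⟩
      simp only [csat_ands', List.forall_mem_ofFn_iff, csat_cex', ih] at h
      apply le_antisymm
      · refine iSup_le fun e => ?_
        obtain ⟨b, hb, h3⟩ := h2 e
        rw [(ih _ _).1 h3]; exact hb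
      · rw [← hb]
        refine iSup_le fun i => ?_
        obtain ⟨e, he⟩ := h i
        rw [← he]
        exact le_iSup (fun e : M => eval truth 𝔐.toModel φ (Function.update ν y e)) e
    · intro h
      obtain ⟨e, he⟩ := exists_eq_ciSup_of_finite
        (f := fun e : M => eval truth 𝔐.toModel φ (Function.update ν y e))
      refine ⟨⟨_, ⟨0, hc, fun _ => a, by simp, rfl⟩, ?_⟩, ?_, by simp⟩
      · simp only [csat_ands', List.forall_mem_ofFn_iff, csat_cex', ih]
        exact fun _ => ⟨e, he.trans h⟩
      · intro e
        refine ⟨⟨_, eval_mem truth A hA 𝔐 φ (Function.update ν y e)⟩, ?_, (ih _ _).2 rfl⟩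
        rw [← h]
        exact le_iSup (fun e : M => eval truth 𝔐.toModel φ (Function.update ν y e)) e

theorem eval_congr_free (truth : TruthFns C) (𝔐 : Model V M) (φ : Formula V C) :
    ∀ ν ν' : ℕ → M, (∀ x, FreeIn x φ → ν x = ν' x) → eval truth 𝔐 φ ν = eval truth 𝔐 φ ν' := by
  have key : ∀ (y : ℕ) (φ : Formula V C) (ν ν' : ℕ → M) (e : M),
      (∀ x, x ≠ y ∧ FreeIn x φ → ν x = ν' x) →
      ∀ x, FreeIn x φ → Function.update ν y e x = Function.update ν' y e x := by
    intro y φ ν ν' e h x hx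
    by_cases hxy : x = y
    · subst hxy; simp
    · simp [hxy, h x ⟨hxy, hx⟩]
  induction φ with
  | pred P v =>
    intro ν ν' h
    simp only [eval]
    congr 1; funext i; exact h _ ⟨i, rfl⟩
  | conn c args ih =>
    intro ν ν' h
    simp only [eval]
    congr 1; funext i; exact ih i _ _ fun x hx => h x ⟨i, hx⟩
  | all y φ ih =>
    intro ν ν' h
    simp only [eval]
    exact iInf_congr fun e => ih _ _ (key y φ ν ν' e h)
  | ex y φ ih =>
    intro ν ν' h
    simp only [eval]
    exact iSup_congr fun e => ih _ _ (key y φ ν ν' e h)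

theorem csat_foralls {A : Finset UI} (𝔑 : CModel V A M) (n : ℕ) (φ : CFormula V A) :
    (∀ ν : ℕ → M, csat 𝔑 (foralls n φ) ν) ↔ ∀ ν : ℕ → M, csat 𝔑 φ ν := by
  induction n with
  | zero => rfl
  | succ n ih =>
    rw [← ih]
    simp only [foralls, csat_call']
    exact ⟨fun h ν => by simpa using h ν (ν n), fun h ν e => h _⟩

theorem forall_val_iff [Nonempty M] (k : ℕ) (p : (Fin k → M) → Prop) :
    (∀ ν : ℕ → M, p fun i => ν i) ↔ ∀ t, p t := by
  refine ⟨fun h t => ?_, fun h ν => h _⟩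
  have := h fun j => if hj : j < k then t ⟨j, hj⟩ else Classical.arbitrary M
  simpa using this

theorem satSigma_iff [Nonempty M] (A : Finset UI) (𝔑 : CModel V A M) :
    SatSigma A 𝔑 ↔ (∀ P t, ∃ a, 𝔑.interp P a t) ∧
      ∀ P t a b, 𝔑.interp P a t → 𝔑.interp P b t → a = b := by
  have h1 : ∀ P : V.Pred, (∀ ν : ℕ → M, csat 𝔑 (totalAx A P) ν) ↔ ∀ t, ∃ a, 𝔑.interp P a t := by
    intro P
    rw [totalAx, csat_foralls, ← forall_val_iff (V.arity P) fun t => ∃ a, 𝔑.interp P a t]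
    simp [csat_ors', csat_pred']
  have h2 : ∀ (P : V.Pred) (a b : ↥A), (∀ ν : ℕ → M, csat 𝔑 (exclAx A P a b) ν) ↔
      ∀ t, ¬ (𝔑.interp P a t ∧ 𝔑.interp P b t) := by
    intro P a b
    rw [exclAx, csat_foralls,
      ← forall_val_iff (V.arity P) fun t => ¬ (𝔑.interp P a t ∧ 𝔑.interp P b t)]
    simp [csat_not', csat_ands', csat_pred']
  constructor
  · intro h
    refine ⟨fun P => (h1 P).1 (h _ (Or.inl ⟨P, rfl⟩)), fun P t a b ha hb => ?_⟩
    by_contra hab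
    exact (h2 P a b).1 (h _ (Or.inr ⟨P, a, b, hab, rfl⟩)) t ⟨ha, hb⟩
  · rintro ⟨ht, he⟩ ψ (⟨P, rfl⟩ | ⟨P, a, b, hab, rfl⟩)
    · exact (h1 P).2 (ht P)
    · exact (h2 P a b).2 fun t h => hab (he P t a b h.1 h.2)

theorem star_satSigma [Nonempty M] (A : Finset UI) (𝔐 : AModel V A M) :
    SatSigma A (star A 𝔐.toModel) := by
  rw [satSigma_iff]
  refine ⟨fun P t => ⟨𝔐 P t, rfl⟩, fun P t a b ha hb => ?_⟩
  exact Subtype.ext (ha.symm.trans hb)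

/-- The correspondence between `A`-valued models and classical models of `Σ`. -/
def starEquiv [Nonempty M] (A : Finset UI) :
    AModel V A M ≃ {𝔑 : CModel V A M // SatSigma A 𝔑} :=
  Equiv.ofBijective (fun 𝔐 => ⟨star A 𝔐.toModel, star_satSigma A 𝔐⟩) (by
    constructor
    · intro 𝔐 𝔐' h
      have h' := congrArg CModel.interp (Subtype.ext_iff.1 h)
      funext P t
      have h3 := congrFun (congrFun (congrFun h' P) (𝔐 P t)) t
      have h4 : (star A 𝔐'.toModel).interp P (𝔐 P t) t := by
        rw [← h3]; exact (rfl : ((𝔐 P t : ↥A) : UI) = _)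
      exact (Subtype.ext h4).symm
    · rintro ⟨⟨I⟩, h⟩
      obtain ⟨ht, he⟩ := (satSigma_iff A _).1 h
      choose f hf using ht
      refine ⟨f, Subtype.ext ?_⟩
      show CModel.mk _ = CModel.mk _
      congr 1
      funext P a t
      refine propext ⟨fun h => ?_, fun h => ?_⟩
      · have : f P t = a := Subtype.ext h
        rw [← this]; exact hf P t
      · exact congrArg Subtype.val (he P t _ _ (hf P t) h))

open Filter in
/-- **Transfer of almost-sure truth** (Proposition 5.3): an MD-sentence
`⟨φ₁, …, φ_m; S⟩` with sentence components and `S ⊆ A^m` is almost surely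
true on `A`-valued models with finite domains `{1, …, n}` iff the classical
sentence `⋁_{(a₁,…,a_m) ∈ S} (T^{a₁}(φ₁) ∧ … ∧ T^{a_m}(φ_m))` is almost
surely true on the finite classical models of `Σ`. -/
theorem almost_sure_transfer
    (V : Vocab) (hVfin : Finite V.Pred) (C : Conns) (truth : TruthFns C)
    (A : Finset UI) (h0 : (0 : UI) ∈ A) (h1 : (1 : UI) ∈ A)
    (hA : ∀ (c : C.Conn) (b : Fin (C.carity c) → UI),
        (∀ i, b i ∈ A) → truth c b ∈ A)
    (m : ℕ) (φ : Fin m → Formula V C) (hsent : ∀ i, IsSentence (φ i))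
    (S : Set (Fin m → ↥A)) :
    Tendsto (fun n : ℕ =>
        ((Nat.card {𝔐 : AModel V A (Fin n) // ASatVals truth 𝔐 φ S} : ℝ) /
          (Nat.card (AModel V A (Fin n)) : ℝ)))
      atTop (nhds 1) ↔
    Tendsto (fun n : ℕ =>
        ((Nat.card {𝔑 : CModel V A (Fin n) // SatSigma A 𝔑 ∧
            ∀ ν : ℕ → Fin n,
              csat 𝔑 (CFormula.ors ((Set.toFinite S).toFinset.toList.map
                (fun v => CFormula.ands
                  (List.ofFn fun i => transl truth A (φ i) (v i))))) ν} : ℝ) /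
          (Nat.card {𝔑 : CModel V A (Fin n) // SatSigma A 𝔑} : ℝ)))
      atTop (nhds 1) := by
  refine Filter.tendsto_congr' ?_
  filter_upwards [Filter.eventually_ge_atTop 1] with n hn
  have : Nonempty (Fin n) := ⟨⟨0, hn⟩⟩
  have e2 := Nat.card_congr (starEquiv (V := V) (M := Fin n) A)
  rw [e2]
  congr 2
  refine Nat.card_congr (((starEquiv (V := V) (M := Fin n) A).subtypeEquiv
    (q := fun 𝔑 => ∀ ν : ℕ → Fin n,
              csat 𝔑.1 (CFormula.ors ((Set.toFinite S).toFinset.toList.map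
                (fun v => CFormula.ands
                  (List.ofFn fun i => transl truth A (φ i) (v i))))) ν) ?_).trans
    (Equiv.subtypeSubtypeEquivSubtypeInter (SatSigma A) (fun 𝔑 => ∀ ν : ℕ → Fin n,
              csat 𝔑 (CFormula.ors ((Set.toFinite S).toFinset.toList.map
                (fun v => CFormula.ands
                  (List.ofFn fun i => transl truth A (φ i) (v i))))) ν)))
  intro 𝔐
  have hs : ((starEquiv (V := V) (M := Fin n) A) 𝔐).1 = star A 𝔐.toModel := rfl
  simp only [hs, csat_ors', List.mem_map, Finset.mem_toList, Set.Finite.mem_toFinset,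
    exists_exists_and_eq_and, csat_ands', List.forall_mem_ofFn_iff, csat_transl truth A hA, ASatVals]
  constructor
  · rintro ⟨v, hv, h⟩ ν
    exact ⟨v, hv, fun i => h i ν⟩
  · intro h
    obtain ⟨v, hv, h⟩ := h fun _ => ⟨0, hn⟩
    refine ⟨v, hv, fun i ν => ?_⟩
    rw [← h i]
    exact eval_congr_free truth _ _ _ _ fun x hx => absurd hx (hsent i x)

end
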